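/- arXiv:2501.09500 — 7 statements merged into one kernel-verified Lean document; each statement's English description precedes it below -/
import Mathlib

section
/- Define K : ℝ × ℝ → ℝ by K(x, y) = 1 + (x − 1/2)(y − 1/2) + (|x − y|² − |x − y| + 1/6)/2. Then for every integer n ≥ 1, ∑_{k=0}^{n-1} ∑_{k'=0}^{n-1} K(k/n, k'/n) = (3n² + 1)/3. -/
/-- The reproducing kernel `K^1_{1,1}` of the first-order unweighted Sobolev
space on `[0,1]`. -/
noncomputable def sobKernel (x y : ℝ) : ℝ :=
  1 + (x - 1/2) * (y - 1/2) + (|x - y| ^ 2 - |x - y| + 1/6) / 2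

open Finset in
/-- `∑ k ^ 2` over `k < n`, as a real number. -/
lemma sum_range_cast_sq (n : ℕ) :
    ∑ k ∈ range n, (k : ℝ) ^ 2 = n * (n - 1) * (2 * n - 1) / 6 := by
  induction n with
  | zero => simp
  | succ n ih => rw [sum_range_succ, ih]; push_cast; ring

open Finset in
lemma sum_range_sum_range_max (n : ℕ) :
    ∑ k ∈ range n, ∑ l ∈ range n, max (k : ℝ) l = n * (n - 1) * (4 * n + 1) / 6 := by
  induction n with
  | zero => simp
  | succ n ih =>
    have hle : ∀ k ∈ range n, (k : ℝ) ≤ n := fun k hk =>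
      Nat.cast_le.mpr (mem_range.mp hk).le
    have hcol : ∑ k ∈ range n, max (k : ℝ) n = n * n := by
      rw [sum_congr rfl fun k hk => max_eq_right (hle k hk)]
      simp
    have hrow : ∑ l ∈ range n, max (n : ℝ) l = n * n := by
      simpa only [max_comm] using hcol
    simp only [sum_range_succ, sum_add_distrib, ih, hcol, hrow, max_self]
    push_cast
    ring

lemma sobKernel_eq_max (x y : ℝ) :
    sobKernel x y = 4 / 3 + (x ^ 2 + y ^ 2) / 2 - max x y := by
  rw [sobKernel, sq_abs, show max x y = (x + y + |x - y|) / 2 by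
    rcases le_total x y with h | h
    · rw [max_eq_right h, abs_of_nonpos (sub_nonpos.mpr h)]; ring
    · rw [max_eq_left h, abs_of_nonneg (sub_nonneg.mpr h)]; ring]
  ring

/-- Section 3.1: Gram-sum identity `∑_{k,k'} K(k/n, k'/n) = (3n² + 1)/3` for the
one-dimensional lattice (left-Riemann) nodes. -/
theorem stmt_9 (n : ℕ) (hn : 1 ≤ n) :
    ∑ k ∈ Finset.range n, ∑ k' ∈ Finset.range n,
        sobKernel ((k : ℝ) / n) ((k' : ℝ) / n) = (3 * (n : ℝ) ^ 2 + 1) / 3 := by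
  have hn0 : (n : ℝ) ≠ 0 := by positivity
  have hK : ∀ k l : ℕ, sobKernel ((k : ℝ) / n) ((l : ℝ) / n) =
      4 / 3 + ((k : ℝ) ^ 2 + (l : ℝ) ^ 2) * (1 / (2 * (n : ℝ) ^ 2)) - max (k : ℝ) l * (1 / n) := by
    intro k l
    rw [sobKernel_eq_max, max_div_div_right (Nat.cast_nonneg n)]
    field_simp
  simp only [hK, Finset.sum_sub_distrib, Finset.sum_add_distrib, ← Finset.sum_mul,
    sum_range_sum_range_max, sum_range_cast_sq, Finset.sum_const, Finset.card_range, nsmul_eq_mul,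
    ← Finset.mul_sum]
  field_simp
  ring
end

section
/- Define K : ℝ × ℝ → ℝ by K(x, y) = 1 + (x − 1/2)(y − 1/2) + (|x − y|² − |x − y| + 1/6)/2. Fix an integer n ≥ 2 and define weights w*_0 = 6n²/(12n³ + n + 3), w*_k = 12n²/(12n³ + n + 3) for 1 ≤ k ≤ n − 2, and w*_{n-1} = 18n²/(12n³ + n + 3). Then for every ℓ ∈ {0, 1, …, n − 1}, ∑_{k=0}^{n-1} w*_k K(ℓ/n, k/n) = 1. -/
/-- The optimal kernel cubature weights for the left-Riemann nodes `t_k = k/n`. -/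
noncomputable def wstar (n k : ℕ) : ℝ :=
  if k = 0 then 6 * (n : ℝ) ^ 2 / (12 * (n : ℝ) ^ 3 + n + 3)
  else if k = n - 1 then 18 * (n : ℝ) ^ 2 / (12 * (n : ℝ) ^ 3 + n + 3)
  else 12 * (n : ℝ) ^ 2 / (12 * (n : ℝ) ^ 3 + n + 3)

lemma sum_range_natCast (m : ℕ) :
    ∑ k ∈ Finset.range m, (k : ℝ) = m * (m - 1) / 2 := by
  induction m with
  | zero => simp
  | succ m ih => rw [Finset.sum_range_succ, ih]; push_cast; ring

lemma sum_range_abs_sub_cast (l m : ℕ) (h : l ≤ m) :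
    ∑ k ∈ Finset.range m, |(l : ℝ) - k| =
      l * (l + 1) / 2 + (m - 1 - l) * (m - l) / 2 := by
  induction m, h using Nat.le_induction with
  | base =>
    rw [Finset.sum_congr rfl fun k hk => abs_of_nonneg
      (sub_nonneg.2 (Nat.cast_le.2 (Finset.mem_range.1 hk).le)), Finset.sum_sub_distrib,
      Finset.sum_const, Finset.card_range, nsmul_eq_mul, sum_range_natCast]
    ring
  | succ m h ih =>
    rw [Finset.sum_range_succ, ih, abs_of_nonpos (sub_nonpos.2 (Nat.cast_le.2 h))]
    push_cast
    ring

lemma sum_range_sub_cast_sq (l m : ℕ) :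
    ∑ k ∈ Finset.range m, ((l : ℝ) - k) ^ 2 =
      m * l ^ 2 - l * m * (m - 1) + m * (m - 1) * (2 * m - 1) / 6 := by
  induction m with
  | zero => simp
  | succ m ih => rw [Finset.sum_range_succ, ih]; push_cast; ring

/-- The kernel at two grid points `l / n`, `k / n`, in terms of the differences `l - k`. -/
lemma sobKernel_div_div (n l k : ℕ) :
    sobKernel ((l : ℝ) / n) ((k : ℝ) / n) =
      1 + 1 / 12 + ((l : ℝ) / n - 1 / 2) * ((l : ℝ) / n - 1 / 2)
        - ((l : ℝ) / n - 1 / 2) / n * ((l : ℝ) - k)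
        + 1 / (2 * (n : ℝ) ^ 2) * ((l : ℝ) - k) ^ 2 - 1 / (2 * (n : ℝ)) * |(l : ℝ) - k| := by
  have h : |(l : ℝ) / n - k / n| = |(l : ℝ) - k| / n := by
    rw [← sub_div, abs_div, Nat.abs_cast]
  rw [sobKernel, h, div_pow, sq_abs]
  ring

lemma wstar_eq (n k : ℕ) (hn : 2 ≤ n) :
    wstar n k = (n : ℝ) ^ 2 / (12 * (n : ℝ) ^ 3 + n + 3) *
      (12 - (if k = 0 then 6 else 0) + (if k = n - 1 then 6 else 0)) := by
  unfold wstar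
  split_ifs
  · omega
  all_goals ring

/-- Section 3.1: the weights `w*` solve the Gram system
`∑_k w*_k K(ℓ/n, k/n) = 1` for all `ℓ ∈ {0, …, n−1}`. -/
theorem stmt_10 (n : ℕ) (hn : 2 ≤ n) (l : ℕ) (hl : l < n) :
    ∑ k ∈ Finset.range n, wstar n k * sobKernel ((l : ℝ) / n) ((k : ℝ) / n) = 1 := by
  have hn0 : (n : ℝ) ≠ 0 := by positivity
  have hD : 12 * (n : ℝ) ^ 3 + n + 3 ≠ 0 := by positivity
  have hcast : ((n - 1 : ℕ) : ℝ) = n - 1 := by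
    rw [Nat.cast_sub (by omega), Nat.cast_one]
  have hle : (l : ℝ) ≤ n - 1 := by
    rw [← hcast]
    exact_mod_cast (by omega : l ≤ n - 1)
  simp only [wstar_eq n _ hn, mul_assoc, ← Finset.mul_sum, add_mul, sub_mul, ite_mul, zero_mul,
    Finset.sum_add_distrib, Finset.sum_sub_distrib, Finset.sum_ite_eq', Finset.mem_range]
  rw [if_pos (by omega), if_pos (by omega)]
  simp only [sobKernel_div_div]
  simp only [Finset.sum_add_distrib, Finset.sum_sub_distrib, ← Finset.mul_sum,
    Finset.sum_const, Finset.card_range, nsmul_eq_mul, sum_range_natCast,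
    sum_range_sub_cast_sq, sum_range_abs_sub_cast l n hl.le, hcast]
  rw [abs_of_nonpos (sub_nonpos.2 hle), Nat.cast_zero, sub_zero, Nat.abs_cast]
  field_simp
  ring
end

section
/- Define K : ℝ × ℝ → ℝ by K(x, y) = 1 + (x − 1/2)(y − 1/2) + (|x − y|² − |x − y| + 1/6)/2. Fix an integer n ≥ 2 and define weights w*_0 = 6n²/(12n³ + n + 3), w*_k = 12n²/(12n³ + n + 3) for 1 ≤ k ≤ n − 2, and w*_{n-1} = 18n²/(12n³ + n + 3). Then 1 − ∑_{k=0}^{n-1} w*_k K(1, k/n) = 6n/(12n³ + n + 3). -/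
/-- On `y ≤ 1` the kernel section at `x = 1` is a quadratic polynomial. -/
lemma sobKernel_one_left {y : ℝ} (hy : y ≤ 1) : sobKernel 1 y = 5 / 6 + y ^ 2 / 2 := by
  rw [sobKernel, abs_of_nonneg (sub_nonneg.2 hy)]
  ring

lemma sum_range_succ_sq (m : ℕ) :
    ∑ k ∈ Finset.range m, ((k : ℝ) + 1) ^ 2 = (m : ℝ) * (m + 1) * (2 * m + 1) / 6 := by
  induction m with
  | zero => simp
  | succ m ih =>
    rw [Finset.sum_range_succ, ih]
    push_cast
    ring

/-- Boundary-defect identity at `x = 1` from the proof of Lemma 2: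
`1 − ∑_k w*_k K(1, k/n) = 6n/(12n³ + n + 3)`. -/
theorem stmt_12 (n : ℕ) (hn : 2 ≤ n) :
    1 - ∑ k ∈ Finset.range n, wstar n k * sobKernel 1 ((k : ℝ) / n)
      = 6 * (n : ℝ) / (12 * (n : ℝ) ^ 3 + n + 3) := by
  have hn0 : (0 : ℝ) < n := by exact_mod_cast (by omega : 0 < n)
  have hD : (12 * (n : ℝ) ^ 3 + n + 3) ≠ 0 := by positivity
  have hK : ∀ k ∈ Finset.range n, wstar n k * sobKernel 1 ((k : ℝ) / n)
      = wstar n k * (5 / 6 + ((k : ℝ) / n) ^ 2 / 2) := fun k hk => by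
    rw [sobKernel_one_left ((div_le_one hn0).2 (by exact_mod_cast (Finset.mem_range.1 hk).le))]
  rw [Finset.sum_congr rfl hK]
  obtain ⟨m, rfl⟩ := Nat.exists_eq_add_of_le' hn
  have hfirst : wstar (m + 2) 0 = 6 * ((m + 2 : ℕ) : ℝ) ^ 2 /
      (12 * ((m + 2 : ℕ) : ℝ) ^ 3 + (m + 2 : ℕ) + 3) := by simp [wstar]
  have hlast : wstar (m + 2) (m + 1) = 18 * ((m + 2 : ℕ) : ℝ) ^ 2 /
      (12 * ((m + 2 : ℕ) : ℝ) ^ 3 + (m + 2 : ℕ) + 3) := by simp [wstar]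
  have hmid : ∀ k ∈ Finset.range m,
      wstar (m + 2) (k + 1) * (5 / 6 + (((k + 1 : ℕ) : ℝ) / (m + 2 : ℕ)) ^ 2 / 2)
        = (10 * ((m + 2 : ℕ) : ℝ) ^ 2 + 6 * ((k : ℝ) + 1) ^ 2) /
          (12 * ((m + 2 : ℕ) : ℝ) ^ 3 + (m + 2 : ℕ) + 3) := fun k hk => by
    have hkm : k ≠ m := (Finset.mem_range.1 hk).ne
    rw [wstar, if_neg (by omega), if_neg (by omega)]
    field_simp
    push_cast
    ring
  rw [Finset.sum_range_succ, Finset.sum_range_succ', Finset.sum_congr rfl hmid, hfirst, hlast,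
    ← Finset.sum_div, Finset.sum_add_distrib, Finset.sum_const, Finset.card_range,
    nsmul_eq_mul, ← Finset.mul_sum, sum_range_succ_sq]
  field_simp
  push_cast
  ring
end

section
/- Define K : ℝ × ℝ → ℝ by K(x, y) = 1 + (x − 1/2)(y − 1/2) + (|x − y|² − |x − y| + 1/6)/2. Then for all a, b ∈ [0,1], ∫_0^1 K(x, a) K(x, b) dx = 46/45 − a²/6 + a³/12 − a⁴/24 + a²b/4 − b²/6 + a b²/4 − a² b²/4 + b³/12 − b⁴/24 + |a − b|³/12. -/
open MeasureTheory

theorem continuous_sobKernel_left (y : ℝ) : Continuous fun x => sobKernel x y := by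
  unfold sobKernel
  fun_prop

theorem sobKernel_of_le {x y : ℝ} (h : x ≤ y) :
    sobKernel x y = (4/3 + y ^ 2 / 2 - y) - 0 * x + x ^ 2 / 2 := by
  rw [sobKernel, abs_of_nonpos (sub_nonpos.2 h)]
  ring

theorem sobKernel_of_ge {x y : ℝ} (h : y ≤ x) :
    sobKernel x y = (4/3 + y ^ 2 / 2) - 1 * x + x ^ 2 / 2 := by
  rw [sobKernel, abs_of_nonneg (sub_nonneg.2 h)]
  ring

theorem integral_quadratic_mul_quadratic (c p d q u v : ℝ) :
    ∫ x in u..v, (c - p * x + x ^ 2 / 2) * (d - q * x + x ^ 2 / 2) =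
      c * d * (v - u) - (c * q + p * d) * (v ^ 2 - u ^ 2) / 2
        + (c / 2 + p * q + d / 2) * (v ^ 3 - u ^ 3) / 3
        - (p + q) / 2 * (v ^ 4 - u ^ 4) / 4 + (v ^ 5 - u ^ 5) / 20 := by
  have hderiv : ∀ x ∈ Set.uIcc u v, HasDerivAt
      (fun x : ℝ => c * d * x - (c * q + p * d) / 2 * x ^ 2
        + (c / 2 + p * q + d / 2) / 3 * x ^ 3 - (p + q) / 8 * x ^ 4 + 1 / 20 * x ^ 5)
      ((c - p * x + x ^ 2 / 2) * (d - q * x + x ^ 2 / 2)) x := by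
    intro x _
    refine ((((((hasDerivAt_id x).const_mul (c * d)).sub
      ((hasDerivAt_pow 2 x).const_mul ((c * q + p * d) / 2))).add
      ((hasDerivAt_pow 3 x).const_mul ((c / 2 + p * q + d / 2) / 3))).sub
      ((hasDerivAt_pow 4 x).const_mul ((p + q) / 8))).add
      ((hasDerivAt_pow 5 x).const_mul (1 / 20))).congr_deriv ?_
    push_cast
    ring
  rw [intervalIntegral.integral_eq_sub_of_hasDerivAt hderiv
    (Continuous.intervalIntegrable (by fun_prop) u v)]
  ring

theorem integral_sobKernel_mul_sobKernel_of_le {a b : ℝ} (ha : 0 ≤ a) (hab : a ≤ b)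
    (hb : b ≤ 1) :
    ∫ x in (0 : ℝ)..1, sobKernel x a * sobKernel x b
      = 46/45 - a ^ 2 / 6 + a ^ 3 / 12 - a ^ 4 / 24 + a ^ 2 * b / 4 - b ^ 2 / 6
        + a * b ^ 2 / 4 - a ^ 2 * b ^ 2 / 4 + b ^ 3 / 12 - b ^ 4 / 24
        + (b - a) ^ 3 / 12 := by
  have hint (u v : ℝ) :
      IntervalIntegrable (fun x => sobKernel x a * sobKernel x b) volume u v :=
    ((continuous_sobKernel_left a).mul (continuous_sobKernel_left b)).intervalIntegrable u v
  have hleft : ∫ x in (0 : ℝ)..a, sobKernel x a * sobKernel x b = _ :=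
    (intervalIntegral.integral_congr fun x hx => by
      rw [Set.uIcc_of_le ha] at hx
      simp only [sobKernel_of_le hx.2, sobKernel_of_le (hx.2.trans hab)]).trans (integral_quadratic_mul_quadratic
        (4/3 + a ^ 2 / 2 - a) 0 (4/3 + b ^ 2 / 2 - b) 0 0 a)
  have hmid : ∫ x in a..b, sobKernel x a * sobKernel x b = _ :=
    (intervalIntegral.integral_congr fun x hx => by
      rw [Set.uIcc_of_le hab] at hx
      simp only [sobKernel_of_ge hx.1, sobKernel_of_le hx.2]).trans (integral_quadratic_mul_quadratic
        (4/3 + a ^ 2 / 2) 1 (4/3 + b ^ 2 / 2 - b) 0 a b)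
  have hright : ∫ x in b..1, sobKernel x a * sobKernel x b = _ :=
    (intervalIntegral.integral_congr fun x hx => by
      rw [Set.uIcc_of_le hb] at hx
      simp only [sobKernel_of_ge (hab.trans hx.1), sobKernel_of_ge hx.1]).trans (integral_quadratic_mul_quadratic
        (4/3 + a ^ 2 / 2) 1 (4/3 + b ^ 2 / 2) 1 b 1)
  rw [← intervalIntegral.integral_add_adjacent_intervals (hint 0 b) (hint b 1),
    ← intervalIntegral.integral_add_adjacent_intervals (hint 0 a) (hint a b),
    hleft, hmid, hright]
  ring

/-- Proof of Lemma 2: closed form for the `L²(0,1)` inner product of two kernel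
sections. -/
theorem stmt_13 (a b : ℝ) (ha : a ∈ Set.Icc (0 : ℝ) 1) (hb : b ∈ Set.Icc (0 : ℝ) 1) :
    ∫ x in (0 : ℝ)..1, sobKernel x a * sobKernel x b
      = 46/45 - a ^ 2 / 6 + a ^ 3 / 12 - a ^ 4 / 24 + a ^ 2 * b / 4 - b ^ 2 / 6
        + a * b ^ 2 / 4 - a ^ 2 * b ^ 2 / 4 + b ^ 3 / 12 - b ^ 4 / 24
        + |a - b| ^ 3 / 12 := by
  rcases le_total a b with hab | hba
  · rw [integral_sobKernel_mul_sobKernel_of_le ha.1 hab hb.2,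
      abs_of_nonpos (sub_nonpos.2 hab)]
    ring
  · simp_rw [mul_comm (sobKernel _ a)]
    rw [integral_sobKernel_mul_sobKernel_of_le hb.1 hba ha.2,
      abs_of_nonneg (sub_nonneg.2 hba)]
    ring
end

section
/- Fix an integer n ≥ 2, set t_k = k/n for k = 0, …, n−1, and define weights w*_0 = 6n²/(12n³ + n + 3), w*_k = 12n²/(12n³ + n + 3) for 1 ≤ k ≤ n − 2, and w*_{n-1} = 18n²/(12n³ + n + 3). Then for every function f : ℝ → ℝ that is twice continuously differentiable on [0,1], |∫_0^1 f(x) dx − ∑_{k=0}^{n-1} w*_k f(k/n)| ≤ (6n/(12n³ + n + 3)) |f'(1)| + (√(6n(n + 15)/5)/(12n³ + n + 3)) (‖f‖_{L²(0,1)} + ‖f''‖_{L²(0,1)}), where ‖g‖_{L²(0,1)} = (∫_0^1 g(x)² dx)^{1/2}. -/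
open MeasureTheory

/-- The `L²(0,1)` norm of a function `g : ℝ → ℝ`. -/
noncomputable def l2Norm (g : ℝ → ℝ) : ℝ :=
  Real.sqrt (∫ x in (0 : ℝ)..1, g x ^ 2)

/-- The Cauchy-Schwarz inequality for interval integrals of continuous functions. -/
theorem sq_integral_mul_le {a b : ℝ} (hab : a ≤ b) {u v : ℝ → ℝ}
    (hu : ContinuousOn u (Set.Icc a b)) (hv : ContinuousOn v (Set.Icc a b)) :
    (∫ x in a..b, u x * v x) ^ 2 ≤ (∫ x in a..b, u x ^ 2) * ∫ x in a..b, v x ^ 2 := by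
  have hv2 : IntervalIntegrable (fun x => v x ^ 2) volume a b :=
    (hv.pow 2).intervalIntegrable_of_Icc hab
  have huv : IntervalIntegrable (fun x => u x * v x) volume a b :=
    (hu.mul hv).intervalIntegrable_of_Icc hab
  have hu2 : IntervalIntegrable (fun x => u x ^ 2) volume a b :=
    (hu.pow 2).intervalIntegrable_of_Icc hab
  have key : ∀ t : ℝ, 0 ≤ (∫ x in a..b, v x ^ 2) * (t * t)
      + (2 * ∫ x in a..b, u x * v x) * t + ∫ x in a..b, u x ^ 2 := by
    intro t
    have h0 : 0 ≤ ∫ x in a..b, (u x + t * v x) ^ 2 :=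
      intervalIntegral.integral_nonneg hab fun x _ => sq_nonneg _
    have h1 : ∫ x in a..b, (u x + t * v x) ^ 2
        = ∫ x in a..b, (t * t * v x ^ 2 + 2 * t * (u x * v x) + u x ^ 2) :=
      intervalIntegral.integral_congr fun x _ => by ring
    rw [h1, intervalIntegral.integral_add ((hv2.const_mul _).add (huv.const_mul _)) hu2,
      intervalIntegral.integral_add (hv2.const_mul _) (huv.const_mul _),
      intervalIntegral.integral_const_mul, intervalIntegral.integral_const_mul] at h0
    linarith
  have := discrim_le_zero key
  rw [discrim] at this
  nlinarith

/-- The squared `L²` norm of a quadratic polynomial vanishing at the left endpoint. -/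
theorem integral_quadratic_sq (a b α β : ℝ) :
    ∫ x in a..b, (α * (x - a) - β * (x - a) ^ 2) ^ 2
      = α ^ 2 * (b - a) ^ 3 / 3 - α * β * (b - a) ^ 4 / 2 + β ^ 2 * (b - a) ^ 5 / 5 := by
  rw [intervalIntegral.integral_eq_sub_of_hasDerivAt (f := fun x =>
    α ^ 2 * (x - a) ^ 3 / 3 - α * β * (x - a) ^ 4 / 2 + β ^ 2 * (x - a) ^ 5 / 5)]
  · simp
  · intro x _
    have h : HasDerivAt (fun y : ℝ => y - a) 1 x := (hasDerivAt_id x).sub_const a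
    refine (((((h.pow 3).const_mul (α ^ 2)).div_const 3).sub
      (((h.pow 4).const_mul (α * β)).div_const 2)).add
      (((h.pow 5).const_mul (β ^ 2)).div_const 5)).congr_deriv ?_
    norm_num
    ring
  · exact Continuous.intervalIntegrable (by fun_prop) _ _

/-- Green's identity for a quadratic polynomial vanishing at the left endpoint. -/
theorem integral_deriv_two_mul_quadratic {a b : ℝ} (hab : a ≤ b) {f f' f'' : ℝ → ℝ}
    (hf : ContinuousOn f (Set.Icc a b)) (hf' : ContinuousOn f' (Set.Icc a b))
    (hf'' : ContinuousOn f'' (Set.Icc a b))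
    (hd : ∀ x ∈ Set.Ioo a b, HasDerivAt f (f' x) x)
    (hd' : ∀ x ∈ Set.Ioo a b, HasDerivAt f' (f'' x) x) (α β : ℝ) :
    ∫ x in a..b, f'' x * (α * (x - a) - β * (x - a) ^ 2)
      = f' b * (α * (b - a) - β * (b - a) ^ 2) - f b * (α - 2 * β * (b - a)) + f a * α
        - 2 * β * ∫ x in a..b, f x := by
  have hq : Continuous fun x : ℝ => α * (x - a) - β * (x - a) ^ 2 := by fun_prop
  have hq' : Continuous fun x : ℝ => α - 2 * β * (x - a) := by fun_prop
  have i1 : IntervalIntegrable (fun x => f'' x * (α * (x - a) - β * (x - a) ^ 2)) volume a b :=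
    (hf''.mul hq.continuousOn).intervalIntegrable_of_Icc hab
  have i2 : IntervalIntegrable (fun x => 2 * β * f x) volume a b :=
    (hf.intervalIntegrable_of_Icc hab).const_mul _
  have h := intervalIntegral.integral_eq_sub_of_hasDerivAt_of_le hab
    (f := fun x => f' x * (α * (x - a) - β * (x - a) ^ 2) - f x * (α - 2 * β * (x - a)))
    (f' := fun x => f'' x * (α * (x - a) - β * (x - a) ^ 2) + 2 * β * f x)
    ((hf'.mul hq.continuousOn).sub (hf.mul hq'.continuousOn)) (fun x hx => by
      have h1 : HasDerivAt (fun y : ℝ => y - a) 1 x := (hasDerivAt_id x).sub_const a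
      refine (((hd' x hx).mul ((h1.const_mul α).sub ((h1.pow 2).const_mul β))).sub
        ((hd x hx).mul ((h1.const_mul (2 * β)).const_sub α))).congr_deriv ?_
      norm_num
      ring) (i1.add i2)
  rw [intervalIntegral.integral_add i1 i2, intervalIntegral.integral_const_mul] at h
  simp only [sub_self] at h
  linarith

/-- The optimally weighted rule is a trapezoidal rule whose last node carries the weight of the
missing right endpoint. -/
theorem sum_wstar_mul (m : ℕ) (hm : 1 ≤ m) (g : ℕ → ℝ) :
    ∑ k ∈ Finset.range (m + 1), wstar (m + 1) k * g k
      = 6 * ((m + 1 : ℕ) : ℝ) ^ 2 / (12 * ((m + 1 : ℕ) : ℝ) ^ 3 + ((m + 1 : ℕ) : ℝ) + 3)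
        * (∑ k ∈ Finset.range m, (g k + g (k + 1)) + 2 * g m) := by
  obtain ⟨j, rfl⟩ := Nat.exists_eq_add_of_le' hm
  have hmid : ∑ k ∈ Finset.range j, wstar (j + 1 + 1) (k + 1) * g (k + 1)
      = ∑ k ∈ Finset.range j, 12 * ((j + 1 + 1 : ℕ) : ℝ) ^ 2 /
        (12 * ((j + 1 + 1 : ℕ) : ℝ) ^ 3 + ((j + 1 + 1 : ℕ) : ℝ) + 3) * g (k + 1) := by
    refine Finset.sum_congr rfl fun k hk => ?_
    have := Finset.mem_range.1 hk
    rw [wstar, if_neg (by omega), if_neg (by omega)]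
  rw [Finset.sum_range_succ, Finset.sum_range_succ', hmid, Finset.sum_add_distrib,
    Finset.sum_range_succ' g, Finset.sum_range_succ (fun k => g (k + 1)), ← Finset.mul_sum,
    wstar, if_pos rfl, wstar, if_neg (by omega), if_pos (by omega)]
  ring

/-- The cubature error for a twice differentiable function, with the derivatives as data. -/
theorem abs_integral_sub_sum_wstar_le (n : ℕ) (hn : 2 ≤ n) {f f' f'' : ℝ → ℝ}
    (hf : ContinuousOn f (Set.Icc 0 1)) (hf' : ContinuousOn f' (Set.Icc 0 1))
    (hf'' : ContinuousOn f'' (Set.Icc 0 1))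
    (hd : ∀ x ∈ Set.Ioo (0 : ℝ) 1, HasDerivAt f (f' x) x)
    (hd' : ∀ x ∈ Set.Ioo (0 : ℝ) 1, HasDerivAt f' (f'' x) x) :
    |(∫ x in (0 : ℝ)..1, f x) - ∑ k ∈ Finset.range n, wstar n k * f ((k : ℝ) / n)|
      ≤ (6 * (n : ℝ) / (12 * (n : ℝ) ^ 3 + n + 3)) * |f' 1|
        + (Real.sqrt (6 * (n : ℝ) * (n + 15) / 5) / (12 * (n : ℝ) ^ 3 + n + 3)) *
            (l2Norm f + l2Norm f'') := by
  obtain ⟨m, rfl⟩ := Nat.exists_eq_add_of_le' (show 1 ≤ n by omega)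
  have hsum := sum_wstar_mul m (by omega) fun k => f ((k : ℝ) / (m + 1 : ℕ))
  rw [hsum]
  have hNm : ((m + 1 : ℕ) : ℝ) = m + 1 := by push_cast; ring
  have hN2 : (2 : ℝ) ≤ ((m + 1 : ℕ) : ℝ) := by exact_mod_cast hn
  generalize ((m + 1 : ℕ) : ℝ) = N at *
  have hN : 0 < N := by linarith
  obtain ⟨D, hD⟩ : ∃ D, D = 12 * N ^ 3 + N + 3 := ⟨_, rfl⟩
  rw [← hD]
  have hDpos : 0 < D := by rw [hD]; positivity
  have hnode : ∀ k : ℕ, ((k + 1 : ℕ) : ℝ) / N - (k : ℝ) / N = 1 / N := by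
    intro k; push_cast; ring
  have hle : ∀ k : ℕ, (k : ℝ) / N ≤ ((k + 1 : ℕ) : ℝ) / N := by
    intro k; have := hnode k; have : 0 < 1 / N := by positivity
    linarith
  have hIcc : ∀ k < m + 1, Set.Icc ((k : ℝ) / N) (((k + 1 : ℕ) : ℝ) / N) ⊆ Set.Icc 0 1 := by
    intro k hk
    apply Set.Icc_subset_Icc (by positivity)
    rw [div_le_one hN, hNm]
    exact_mod_cast hk
  have hIoo : ∀ k < m + 1, Set.Ioo ((k : ℝ) / N) (((k + 1 : ℕ) : ℝ) / N) ⊆ Set.Ioo 0 1 := by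
    intro k hk
    apply Set.Ioo_subset_Ioo (by positivity)
    rw [div_le_one hN, hNm]
    exact_mod_cast hk
  have hlast : ((m + 1 : ℕ) : ℝ) / N = 1 := by
    rw [hNm]; push_cast; rw [← hNm]; exact div_self hN.ne'
  have hsplit : ∀ u : ℝ → ℝ, ContinuousOn u (Set.Icc 0 1) →
      ∑ k ∈ Finset.range (m + 1), ∫ x in ((k : ℝ) / N)..(((k + 1 : ℕ) : ℝ) / N), u x
        = ∫ x in (0 : ℝ)..1, u x := by
    intro u hu
    rw [intervalIntegral.sum_integral_adjacent_intervals (a := fun k : ℕ => (k : ℝ) / N)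
      fun k hk => (hu.mono (hIcc k hk)).intervalIntegrable_of_Icc (hle k)]
    simp only [hlast, Nat.cast_zero, zero_div]
  -- On the `k`-th cell the error representer is `α k * (x - k / N) - β * (x - k / N) ^ 2`.
  obtain ⟨α, hα⟩ : ∃ α : ℕ → ℝ,
      α = fun k => if k = m then 12 * N ^ 2 / D else 6 * N ^ 2 / D := ⟨_, rfl⟩
  obtain ⟨β, hβ⟩ : ∃ β : ℝ, β = 6 * N ^ 3 / D := ⟨_, rfl⟩
  have hαm : α m = 12 * N ^ 2 / D := by simp [hα]
  have hαk : ∀ k < m, α k = 6 * N ^ 2 / D := by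
    intro k hk; simp [hα, hk.ne]
  obtain ⟨A, hA⟩ : ∃ A : ℕ → ℝ, A = fun k => ∫ x in ((k : ℝ) / N)..(((k + 1 : ℕ) : ℝ) / N),
      f'' x * (α k * (x - (k : ℝ) / N) - β * (x - (k : ℝ) / N) ^ 2) := ⟨_, rfl⟩
  have hgreen := fun (k : ℕ) (hk : k < m + 1) => (congrFun hA k).trans <|
    integral_deriv_two_mul_quadratic (hle k) (hf.mono (hIcc k hk))
      (hf'.mono (hIcc k hk)) (hf''.mono (hIcc k hk)) (fun x hx => hd x (hIoo k hk hx))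
      (fun x hx => hd' x (hIoo k hk hx)) (α k) β
  have hAk : ∀ k ∈ Finset.range m, A k
      = 6 * N ^ 2 / D * (f ((k : ℝ) / N) + f (((k + 1 : ℕ) : ℝ) / N))
        - 2 * β * ∫ x in ((k : ℝ) / N)..(((k + 1 : ℕ) : ℝ) / N), f x := by
    intro k hk
    have hk := Finset.mem_range.1 hk
    rw [hgreen k (by omega), hnode, hαk k hk, hβ]
    field_simp
    ring
  have hAm : A m = 6 * N / D * f' 1 + 6 * N ^ 2 / D * (2 * f ((m : ℝ) / N))
        - 2 * β * ∫ x in ((m : ℝ) / N)..(((m + 1 : ℕ) : ℝ) / N), f x := by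
    rw [hgreen m (by omega), hnode, hαm, hlast, hβ]
    field_simp
    ring
  have herr : (∫ x in (0 : ℝ)..1, f x) - 6 * N ^ 2 / D *
        (∑ k ∈ Finset.range m, (f ((k : ℝ) / N) + f (((k + 1 : ℕ) : ℝ) / N))
          + 2 * f ((m : ℝ) / N))
      = (N + 3) / D * (∫ x in (0 : ℝ)..1, f x) + 6 * N / D * f' 1
        - ∑ k ∈ Finset.range (m + 1), A k := by
    have h2 : (N + 3) / D = 1 - 2 * β := by
      rw [hβ]; field_simp; rw [hD]; ring
    rw [h2, Finset.sum_range_succ, Finset.sum_congr rfl hAk, hAm, Finset.sum_sub_distrib,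
      ← Finset.mul_sum, ← Finset.mul_sum, ← hsplit f hf, Finset.sum_range_succ _ m]
    ring
  have hquad : ∑ k ∈ Finset.range (m + 1), ∫ x in ((k : ℝ) / N)..(((k + 1 : ℕ) : ℝ) / N),
      (α k * (x - (k : ℝ) / N) - β * (x - (k : ℝ) / N) ^ 2) ^ 2
        = 6 * N * (N + 15) / 5 / D ^ 2 := by
    simp only [integral_quadratic_sq, hnode]
    rw [Finset.sum_range_succ, Finset.sum_congr rfl
      (fun k hk => by rw [hαk k (Finset.mem_range.1 hk)]), Finset.sum_const, Finset.card_range,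
      hαm, nsmul_eq_mul, show (m : ℝ) = N - 1 by linarith, hβ]
    field_simp
    ring
  have hCS : (∑ k ∈ Finset.range (m + 1), A k) ^ 2
      ≤ (∫ x in (0 : ℝ)..1, f'' x ^ 2) * (6 * N * (N + 15) / 5 / D ^ 2) := by
    rw [← hsplit (fun x => f'' x ^ 2) (hf''.pow 2), ← hquad]
    refine Finset.sum_sq_le_sum_mul_sum_of_sq_le_mul _
      (fun k _ => intervalIntegral.integral_nonneg (hle k) fun x _ => sq_nonneg _)
      (fun k _ => intervalIntegral.integral_nonneg (hle k) fun x _ => sq_nonneg _)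
      fun k hk => ?_
    rw [hA]
    exact sq_integral_mul_le (hle k) (hf''.mono (hIcc k (Finset.mem_range.1 hk)))
      (Continuous.continuousOn (by fun_prop))
  have hA_le : |∑ k ∈ Finset.range (m + 1), A k|
      ≤ Real.sqrt (6 * N * (N + 15) / 5) / D * l2Norm f'' := by
    refine (Real.abs_le_sqrt hCS).trans_eq ?_
    rw [Real.sqrt_mul (intervalIntegral.integral_nonneg zero_le_one fun x _ => sq_nonneg _),
      Real.sqrt_div (by positivity), Real.sqrt_sq hDpos.le, l2Norm, mul_comm]
  have hint : |∫ x in (0 : ℝ)..1, f x| ≤ l2Norm f := by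
    have h := sq_integral_mul_le zero_le_one hf (continuousOn_const (c := (1 : ℝ)))
    simp only [mul_one, one_pow, intervalIntegral.integral_const, sub_zero, smul_eq_mul] at h
    exact Real.abs_le_sqrt h
  have hcoef : (N + 3) / D ≤ Real.sqrt (6 * N * (N + 15) / 5) / D := by
    gcongr
    apply Real.le_sqrt_of_sq_le
    nlinarith
  rw [herr]
  calc _ ≤ |(N + 3) / D * ∫ x in (0 : ℝ)..1, f x| + |6 * N / D * f' 1|
          + |∑ k ∈ Finset.range (m + 1), A k| :=
        (abs_sub _ _).trans (add_le_add_left (abs_add_le _ _) _)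
    _ ≤ Real.sqrt (6 * N * (N + 15) / 5) / D * l2Norm f + 6 * N / D * |f' 1|
          + Real.sqrt (6 * N * (N + 15) / 5) / D * l2Norm f'' := by
        rw [abs_mul, abs_mul, abs_of_nonneg (show 0 ≤ (N + 3) / D by positivity),
          abs_of_nonneg (show 0 ≤ 6 * N / D by positivity)]
        gcongr
    _ = _ := by ring

/-- The quantitative error bound from the proof of Lemma 2 for the optimally
weighted one-dimensional lattice rule. -/
theorem stmt_16 (n : ℕ) (hn : 2 ≤ n) (f : ℝ → ℝ)
    (hf : ContDiffOn ℝ 2 f (Set.Icc (0 : ℝ) 1)) :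
    |(∫ x in (0 : ℝ)..1, f x) - ∑ k ∈ Finset.range n, wstar n k * f ((k : ℝ) / n)|
      ≤ (6 * (n : ℝ) / (12 * (n : ℝ) ^ 3 + n + 3)) *
          |derivWithin f (Set.Icc (0 : ℝ) 1) 1|
        + (Real.sqrt (6 * (n : ℝ) * (n + 15) / 5) / (12 * (n : ℝ) ^ 3 + n + 3)) *
            (l2Norm f + l2Norm (iteratedDerivWithin 2 f (Set.Icc (0 : ℝ) 1))) := by
  have hs : UniqueDiffOn ℝ (Set.Icc (0 : ℝ) 1) := uniqueDiffOn_Icc zero_lt_one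
  have h1 := hf.continuousOn_iteratedDerivWithin (m := 1) (by norm_num) hs
  have h1d := hf.differentiableOn_iteratedDerivWithin (m := 1) (by norm_num) hs
  have h2 := hf.continuousOn_iteratedDerivWithin (m := 2) (by norm_num) hs
  rw [iteratedDerivWithin_one] at h1 h1d
  refine abs_integral_sub_sum_wstar_le n hn hf.continuousOn h1 h2 (fun x hx => ?_) fun x hx => ?_
  · exact ((hf.differentiableOn (by norm_num) x
      (Set.Ioo_subset_Icc_self hx)).hasDerivWithinAt).hasDerivAt (Icc_mem_nhds hx.1 hx.2)
  · rw [iteratedDerivWithin_succ, iteratedDerivWithin_one]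
    exact ((h1d x (Set.Ioo_subset_Icc_self hx)).hasDerivWithinAt).hasDerivAt
      (Icc_mem_nhds hx.1 hx.2)
end

section
/- For each integer n ≥ 2 define weights w*_0(n) = 6n²/(12n³ + n + 3), w*_k(n) = 12n²/(12n³ + n + 3) for 1 ≤ k ≤ n − 2, and w*_{n-1}(n) = 18n²/(12n³ + n + 3). Then for every function f : ℝ → ℝ that is twice continuously differentiable on [0,1], there exists a constant C > 0 such that for all integers n ≥ 2, |∫_0^1 f(x) dx − ∑_{k=0}^{n-1} w*_k(n) f(k/n)| ≤ C n^{−2}. -/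
open Finset in
/-- Up to the factor `12 n³ / (12 n³ + n + 3)`, the optimal rule is the trapezoidal rule
with `f 1` replaced by `f ((n - 1) / n)`. -/
lemma sum_wstar_mul_eq (f : ℝ → ℝ) {n : ℕ} (hn : 2 ≤ n) :
    ∑ k ∈ range n, wstar n k * f ((k : ℝ) / n) =
      12 * (n : ℝ) ^ 3 / (12 * (n : ℝ) ^ 3 + n + 3) *
        (trapezoidal_integral f n 0 1 - (f 1 - f (((n : ℝ) - 1) / n)) / (2 * n)) := by
  obtain ⟨m, rfl⟩ := Nat.exists_eq_add_of_le' hn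
  have hD : (12 * ((m + 2 : ℕ) : ℝ) ^ 3 + (m + 2 : ℕ) + 3) ≠ 0 := by positivity
  have hN : ((m + 2 : ℕ) : ℝ) ≠ 0 := by positivity
  have hlast : ((m + 2 : ℕ) : ℝ) - 1 = (m : ℝ) + 1 := by push_cast; ring
  have hmid : ∀ k ∈ range m, wstar (m + 2) (k + 1) * f (((k + 1 : ℕ) : ℝ) / (m + 2 : ℕ)) =
      12 * ((m + 2 : ℕ) : ℝ) ^ 2 / (12 * ((m + 2 : ℕ) : ℝ) ^ 3 + (m + 2 : ℕ) + 3) *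
        f (((k : ℝ) + 1) / (m + 2 : ℕ)) := by
    intro k hk
    have hk' : k + 1 ≠ m + 2 - 1 := by have := mem_range.1 hk; omega
    rw [wstar, if_neg k.succ_ne_zero, if_neg hk', Nat.cast_succ k]
  have hend : wstar (m + 2) (m + 1) =
      18 * ((m + 2 : ℕ) : ℝ) ^ 2 / (12 * ((m + 2 : ℕ) : ℝ) ^ 3 + (m + 2 : ℕ) + 3) := by
    simp [wstar]
  have hzero : wstar (m + 2) 0 =
      6 * ((m + 2 : ℕ) : ℝ) ^ 2 / (12 * ((m + 2 : ℕ) : ℝ) ^ 3 + (m + 2 : ℕ) + 3) := by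
    simp [wstar]
  rw [sum_range_succ, sum_range_succ', sum_congr rfl hmid, ← mul_sum, hend, hzero, hlast,
    trapezoidal_integral, show m + 2 - 1 = m + 1 from rfl, sum_range_succ]
  simp only [zero_add, sub_zero, mul_one, Nat.cast_zero, zero_div, Nat.cast_succ m]
  generalize ((m + 2 : ℕ) : ℝ) = N at *
  field_simp
  ring

open Set in
lemma exists_abs_iteratedDerivWithin_two_le {f : ℝ → ℝ} {a b : ℝ} (hab : a < b)
    (hf : ContDiffOn ℝ 2 f (Icc a b)) :
    ∃ ζ, ∀ x, |iteratedDerivWithin 2 f (Icc a b) x| ≤ ζ := by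
  obtain ⟨ζ, hζ⟩ := isCompact_Icc.exists_bound_of_continuousOn
    (hf.continuousOn_iteratedDerivWithin le_rfl (uniqueDiffOn_Icc hab))
  refine ⟨ζ, fun x => ?_⟩
  by_cases hx : x ∈ Icc a b
  · exact hζ x hx
  · rw [iteratedDerivWithin_succ, derivWithin_zero_of_notMem_closure (by rwa [closure_Icc]),
      abs_zero]
    exact (norm_nonneg _).trans (hζ a (left_mem_Icc.2 hab.le))

/-- Lemma 2: the optimally weighted one-dimensional lattice rule converges at the
doubled rate `O(n^{−2})` for integrands that are `C²` on `[0,1]`. -/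
theorem stmt_17 (f : ℝ → ℝ) (hf : ContDiffOn ℝ 2 f (Set.Icc (0 : ℝ) 1)) :
    ∃ C : ℝ, 0 < C ∧ ∀ n : ℕ, 2 ≤ n →
      |(∫ x in (0 : ℝ)..1, f x) - ∑ k ∈ Finset.range n, wstar n k * f ((k : ℝ) / n)|
        ≤ C / (n : ℝ) ^ 2 := by
  obtain ⟨ζ, hζ⟩ := exists_abs_iteratedDerivWithin_two_le zero_lt_one hf
  obtain ⟨L, hL⟩ := hf.exists_lipschitzOnWith two_ne_zero (convex_Icc 0 1) isCompact_Icc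
  have hζ0 : 0 ≤ ζ := (abs_nonneg _).trans (hζ 0)
  refine ⟨ζ / 12 + L / 2 + |∫ x in (0 : ℝ)..1, f x| + 1, by positivity, fun n hn => ?_⟩
  have hn1 : (1 : ℝ) ≤ n := by exact_mod_cast (by omega : 1 ≤ n)
  have hn0 : (0 : ℝ) < n := by linarith
  have htrap : |trapezoidal_integral f n 0 1 - ∫ x in (0 : ℝ)..1, f x| ≤ ζ / 12 / (n : ℝ) ^ 2 := by
    rw [← Set.uIcc_of_le zero_le_one] at hf hζ
    refine (trapezoidal_error_le_of_c2 hf hζ (by omega : 0 < n)).trans_eq ?_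
    rw [sub_zero, abs_one]
    field_simp
  have hend : |f 1 - f (((n : ℝ) - 1) / n)| ≤ L / n := by
    have hmem : ((n : ℝ) - 1) / n ∈ Set.Icc (0 : ℝ) 1 :=
      ⟨div_nonneg (by linarith) hn0.le, (div_le_one hn0).2 (by linarith)⟩
    have h := hL.dist_le_mul 1 (Set.right_mem_Icc.2 zero_le_one) _ hmem
    have hdist : (1 : ℝ) - (n - 1) / n = 1 / n := by field_simp; ring
    rwa [Real.dist_eq, Real.dist_eq, hdist, abs_of_pos (one_div_pos.2 hn0), mul_one_div] at h
  rw [sum_wstar_mul_eq f hn]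
  set I := ∫ x in (0 : ℝ)..1, f x
  set T := trapezoidal_integral f n 0 1
  set δ := f 1 - f (((n : ℝ) - 1) / n)
  set r : ℝ := 12 * (n : ℝ) ^ 3 / (12 * (n : ℝ) ^ 3 + n + 3) with hr
  have hr0 : 0 ≤ r := by positivity
  have hr1 : r ≤ 1 := (div_le_one (by positivity)).2 (by linarith)
  have hr2 : 1 - r ≤ 1 / (n : ℝ) ^ 2 := by
    have h : 1 - r = (n + 3) / (12 * (n : ℝ) ^ 3 + n + 3) := by
      rw [hr]; field_simp; ring
    rw [h, div_le_div_iff₀ (by positivity) (by positivity)]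
    nlinarith [mul_le_mul_of_nonneg_left hn1 (sq_nonneg (n : ℝ))]
  have hδ : |δ / (2 * n)| ≤ L / 2 / (n : ℝ) ^ 2 := by
    rw [abs_div, abs_of_pos (by positivity : (0 : ℝ) < 2 * n)]
    calc |δ| / (2 * n) ≤ L / n / (2 * n) := by gcongr
      _ = L / 2 / (n : ℝ) ^ 2 := by field_simp
  have hU : |I - (T - δ / (2 * n))| ≤ (ζ / 12 + L / 2) / (n : ℝ) ^ 2 := by
    rw [show I - (T - δ / (2 * n)) = -(T - I) + δ / (2 * n) by ring, add_div]
    exact (abs_add_le _ _).trans (add_le_add (by rwa [abs_neg]) hδ)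
  calc |I - r * (T - δ / (2 * n))|
      = |r * (I - (T - δ / (2 * n))) + (1 - r) * I| := by congr 1; ring
    _ ≤ r * |I - (T - δ / (2 * n))| + (1 - r) * |I| := by
      refine (abs_add_le _ _).trans_eq ?_
      rw [abs_mul, abs_mul, abs_of_nonneg hr0, abs_of_nonneg (sub_nonneg.2 hr1)]
    _ ≤ 1 * ((ζ / 12 + L / 2) / (n : ℝ) ^ 2) + 1 / (n : ℝ) ^ 2 * |I| := by gcongr
    _ = (ζ / 12 + L / 2 + |I|) / (n : ℝ) ^ 2 := by ring
    _ ≤ (ζ / 12 + L / 2 + |I| + 1) / (n : ℝ) ^ 2 :=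
      div_le_div_of_nonneg_right (le_add_of_nonneg_right zero_le_one) (by positivity)
end

section
/- For every integer n ≥ 1 and every continuously differentiable function f : ℝ → ℝ on [0,1], |∫_0^1 f(x) dx − (1/n) ∑_{k=0}^{n-1} f(k/n)| ≤ (1/(√3 · n)) · √((∫_0^1 f(x) dx)² + ∫_0^1 f'(x)² dx). -/
open MeasureTheory intervalIntegral in
/-- Cauchy–Schwarz bound, in linearised form with free parameter `t`, for the error of the
left-endpoint rule on a single interval. -/
theorem left_endpoint_error_le {a b : ℝ} (hab : a ≤ b) {f g : ℝ → ℝ}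
    (hf : ContinuousOn f (Set.Icc a b)) (hg : ContinuousOn g (Set.Icc a b))
    (hfg : ∀ x ∈ Set.Ioo a b, HasDerivAt f (g x) x) (t : ℝ) :
    2 * t * ((∫ x in a..b, f x) - (b - a) * f a)
      ≤ (∫ x in a..b, g x ^ 2) + t ^ 2 * ((b - a) ^ 3 / 3) := by
  have hfi : IntervalIntegrable f volume a b := hf.intervalIntegrable_of_Icc hab
  have hwg : IntervalIntegrable (fun x => (b - x) * g x) volume a b :=
    ContinuousOn.intervalIntegrable_of_Icc hab (by fun_prop)
  have hg2 : IntervalIntegrable (fun x => g x ^ 2) volume a b :=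
    ContinuousOn.intervalIntegrable_of_Icc hab (by fun_prop)
  have hw2 : IntervalIntegrable (fun x => (b - x) ^ 2) volume a b :=
    Continuous.intervalIntegrable (by fun_prop) a b
  have parts : (∫ x in a..b, f x) - (b - a) * f a = ∫ x in a..b, (b - x) * g x := by
    have h := integral_eq_sub_of_hasDerivAt_of_le (f := fun x => (b - x) * f x)
      (f' := fun x => (b - x) * g x - f x) hab (by fun_prop)
      (fun x hx => (((hasDerivAt_id' x).const_sub b).mul (hfg x hx)).congr_deriv (by ring)) (hwg.sub hfi)
    rw [integral_sub hwg hfi] at h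
    linarith
  have weight : ∫ x in a..b, (b - x) ^ 2 = (b - a) ^ 3 / 3 := by
    rw [integral_comp_sub_left (fun x => x ^ 2) b, integral_pow]
    norm_num
  have nonneg : 0 ≤ ∫ x in a..b, (g x - t * (b - x)) ^ 2 :=
    integral_nonneg hab fun x _ => sq_nonneg _
  have expand : ∫ x in a..b, (g x - t * (b - x)) ^ 2
      = (∫ x in a..b, g x ^ 2) - 2 * t * (∫ x in a..b, (b - x) * g x)
        + t ^ 2 * ∫ x in a..b, (b - x) ^ 2 := by
    rw [← intervalIntegral.integral_const_mul, ← intervalIntegral.integral_const_mul,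
      ← integral_sub hg2 (hwg.const_mul _),
      ← integral_add (hg2.sub (hwg.const_mul _)) (hw2.const_mul _)]
    congr 1
    ext x
    ring
  rw [parts]
  rw [expand, weight] at nonneg
  linarith

open MeasureTheory intervalIntegral in
/-- The squared error of the left Riemann sum on `[0, 1]` with `n` nodes is at most
`‖f'‖² / (3 n²)`. -/
theorem left_riemann_error_sq_le {n : ℕ} (hn : 1 ≤ n) {f g : ℝ → ℝ}
    (hf : ContinuousOn f (Set.Icc 0 1)) (hg : ContinuousOn g (Set.Icc 0 1))
    (hfg : ∀ x ∈ Set.Ioo (0 : ℝ) 1, HasDerivAt f (g x) x) :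
    3 * (n : ℝ) ^ 2 *
        ((∫ x in (0 : ℝ)..1, f x) - (1 / (n : ℝ)) * ∑ k ∈ Finset.range n, f ((k : ℝ) / n)) ^ 2
      ≤ ∫ x in (0 : ℝ)..1, g x ^ 2 := by
  have hn0 : (0 : ℝ) < n := by exact_mod_cast hn
  have node_le (k : ℕ) : (k : ℝ) / n ≤ ((k + 1 : ℕ) : ℝ) / n := by
    gcongr
    simp
  have node_nonneg (k : ℕ) : 0 ≤ (k : ℝ) / n := by positivity
  have node_le_one {k : ℕ} (hk : k < n) : ((k + 1 : ℕ) : ℝ) / n ≤ 1 := by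
    rw [div_le_one hn0]
    exact_mod_cast hk
  have sub {k : ℕ} (hk : k < n) :
      Set.Icc ((k : ℝ) / n) (((k + 1 : ℕ) : ℝ) / n) ⊆ Set.Icc 0 1 :=
    Set.Icc_subset_Icc (node_nonneg k) (node_le_one hk)
  have split {φ : ℝ → ℝ} (hφ : ContinuousOn φ (Set.Icc 0 1)) :
      ∑ k ∈ Finset.range n, ∫ x in ((k : ℝ) / n)..(((k + 1 : ℕ) : ℝ) / n), φ x
        = ∫ x in (0 : ℝ)..1, φ x := by
    rw [sum_integral_adjacent_intervals (a := fun k : ℕ => (k : ℝ) / n) fun k hk =>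
      (hφ.mono (sub hk)).intervalIntegrable_of_Icc (node_le k)]
    simp [hn0.ne']
  have step (k : ℕ) : ((k + 1 : ℕ) : ℝ) / n - (k : ℝ) / n = 1 / n := by
    push_cast
    ring
  set E := (∫ x in (0 : ℝ)..1, f x) - (1 / (n : ℝ)) * ∑ k ∈ Finset.range n, f ((k : ℝ) / n)
    with hE
  have key (t : ℝ) : 2 * t * E ≤ (∫ x in (0 : ℝ)..1, g x ^ 2) + t ^ 2 * (1 / (3 * n ^ 2)) := by
    have h := Finset.sum_le_sum fun k (hk : k ∈ Finset.range n) =>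
      left_endpoint_error_le (node_le k) (hf.mono (sub (Finset.mem_range.1 hk)))
        (hg.mono (sub (Finset.mem_range.1 hk)))
        (fun x hx => hfg x (Set.Ioo_subset_Ioo (node_nonneg k)
          (node_le_one (Finset.mem_range.1 hk)) hx)) t
    simp only [step] at h
    rw [← Finset.mul_sum, Finset.sum_sub_distrib, Finset.sum_add_distrib, split hf,
      split (φ := fun x => g x ^ 2) (hg.pow 2), ← Finset.mul_sum, ← hE, Finset.sum_const, Finset.card_range,
      nsmul_eq_mul] at h
    have hw : (n : ℝ) * (t ^ 2 * ((1 / n) ^ 3 / 3)) = t ^ 2 * (1 / (3 * n ^ 2)) := by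
      field_simp
    rwa [hw] at h
  have h := key (3 * n ^ 2 * E)
  have cancel : (3 * (n : ℝ) ^ 2 * E) ^ 2 * (1 / (3 * n ^ 2)) = 3 * n ^ 2 * E ^ 2 := by
    field_simp
  rw [cancel] at h
  linarith

/-- The `O(n^{−1})` bound for the equally weighted one-dimensional lattice
(left-Riemann) rule: `|I f − Q_T f| ≤ (1/(√3 n)) ‖f‖_{H¹_{1,1}}`, where the
Sobolev norm is `√((∫_0^1 f)² + ∫_0^1 (f')²)`. -/
theorem stmt_18 (n : ℕ) (hn : 1 ≤ n) (f : ℝ → ℝ)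
    (hf : ContDiffOn ℝ 1 f (Set.Icc (0 : ℝ) 1)) :
    |(∫ x in (0 : ℝ)..1, f x) - (1 / (n : ℝ)) * ∑ k ∈ Finset.range n, f ((k : ℝ) / n)|
      ≤ (1 / (Real.sqrt 3 * n)) *
          Real.sqrt ((∫ x in (0 : ℝ)..1, f x) ^ 2
            + ∫ x in (0 : ℝ)..1, derivWithin f (Set.Icc (0 : ℝ) 1) x ^ 2) := by
  have hn0 : (0 : ℝ) < n := by exact_mod_cast hn
  have h := left_riemann_error_sq_le hn hf.continuousOn
    (hf.continuousOn_derivWithin (uniqueDiffOn_Icc zero_lt_one) le_rfl) fun x hx =>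
      ((hf.differentiableOn one_ne_zero x
        (Set.Ioo_subset_Icc_self hx)).hasDerivWithinAt).hasDerivAt (Icc_mem_nhds hx.1 hx.2)
  rw [one_div_mul_eq_div (√3 * (n : ℝ)), le_div_iff₀ (by positivity)]
  apply Real.le_sqrt_of_sq_le
  rw [mul_pow, mul_pow, sq_abs, Real.sq_sqrt (by norm_num)]
  nlinarith [sq_nonneg (∫ x in (0 : ℝ)..1, f x)]
end
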